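/- arXiv:2505.08407 — 3 statements merged into one kernel-verified Lean document; each statement's English description precedes it below -/
import Mathlib

section
/- Let (Ω, F, P) be a probability space and let X_B, X_E : Ω → ℝ be nonnegative integrable random variables (representing the instantaneous SNRs of the legitimate receiver Bob and the eavesdropper Eve) such that ln(X_B), log₂(1+X_B) and log₂(1+X_E) are integrable and X_B > 0 almost surely. Fix a blocklength n ≥ 1 (a natural number) and nonnegative real constants q_ε, q_δ ≥ 0 (the values Q⁻¹(ε_B) and Q⁻¹(δ) of the inverse Gaussian Q-function at the reliability and leakage targets, which are nonnegative when these targets are at most 1/2). Define the finite-blocklength secrecy rate R_s := max(log₂(1+X_B) − log₂(1+X_E), 0) − (q_ε/√n)·√((X_B² + 2X_B)/((ln 2)²(1+X_B)²)) − (q_δ/√n)·√((X_E² + 2X_E)/((ln 2)²(1+X_E)²)). Then E[R_s] ≥ log₂(1 + exp(E[ln X_B])) − log₂(1 + E[X_E]) − (q_ε/((ln 2)·√n))·√(1 − 1/(1 + E[X_B])²) − (q_δ/((ln 2)·√n))·√(1 − 1/(1 + E[X_E])²). -/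
open MeasureTheory

/-- Tangent-line bound for the convex function `t ↦ log (1 + exp t)`. -/
lemma log_one_add_exp_tangent_le (m t : ℝ) :
    Real.log (1 + Real.exp m) + Real.exp m / (1 + Real.exp m) * (t - m) ≤
      Real.log (1 + Real.exp t) := by
  have hm := Real.exp_pos m
  have ht := Real.exp_pos t
  set s := Real.exp m / (1 + Real.exp m) with hs
  have hs0 : 0 ≤ s := by positivity
  have hs1 : 0 ≤ 1 - s := by
    rw [sub_nonneg, hs, div_le_one (by positivity)]
    linarith
  have hconv := convexOn_exp.2 (Set.mem_univ 0) (Set.mem_univ (t - m)) hs1 hs0 (by ring)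
  simp only [smul_eq_mul, mul_zero, zero_add, Real.exp_zero, mul_one] at hconv
  have hsplit : 1 - s + s * Real.exp (t - m) = (1 + Real.exp t) / (1 + Real.exp m) := by
    rw [hs, Real.exp_sub]
    field_simp
    ring
  rw [hsplit] at hconv
  have hlog := Real.log_le_log (Real.exp_pos _) hconv
  rw [Real.log_exp, Real.log_div (by positivity) (by positivity)] at hlog
  linarith

/-- Jensen's inequality for `t ↦ log (1 + exp t)`, in terms of `X = exp t`. -/
lemma logb_one_add_exp_integral_log_le {Ω : Type*} [MeasurableSpace Ω]
    {P : Measure Ω} [IsProbabilityMeasure P] {X : Ω → ℝ} (hpos : ∀ᵐ ω ∂P, 0 < X ω)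
    (hln : Integrable (fun ω => Real.log (X ω)) P)
    (hC : Integrable (fun ω => Real.logb 2 (1 + X ω)) P) :
    Real.logb 2 (1 + Real.exp (∫ ω, Real.log (X ω) ∂P)) ≤
      ∫ ω, Real.logb 2 (1 + X ω) ∂P := by
  have hl2 : 0 < Real.log 2 := Real.log_pos one_lt_two
  set m := ∫ ω, Real.log (X ω) ∂P with hm
  have hdev : Integrable (fun ω => Real.log (X ω) - m) P := hln.sub (integrable_const m)
  have hslope := hdev.const_mul (Real.exp m / (1 + Real.exp m) / Real.log 2)
  have hle : ∫ ω, (Real.logb 2 (1 + Real.exp m) +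
      Real.exp m / (1 + Real.exp m) / Real.log 2 * (Real.log (X ω) - m)) ∂P ≤
      ∫ ω, Real.logb 2 (1 + X ω) ∂P := by
    refine integral_mono_ae ((integrable_const _).add hslope) hC ?_
    filter_upwards [hpos] with ω hω
    have h := log_one_add_exp_tangent_le m (Real.log (X ω))
    rw [Real.exp_log hω] at h
    simp only [Real.logb]
    calc _ = (Real.log (1 + Real.exp m) +
          Real.exp m / (1 + Real.exp m) * (Real.log (X ω) - m)) / Real.log 2 := by ring
      _ ≤ _ := by gcongr
  rw [integral_add (integrable_const _) hslope, integral_const_mul,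
    integral_sub hln (integrable_const m), ← hm] at hle
  simpa using hle

/-- Jensen's inequality for `x ↦ log₂ (1 + x)`. -/
lemma integral_logb_one_add_le {Ω : Type*} [MeasurableSpace Ω]
    {P : Measure Ω} [IsProbabilityMeasure P] {X : Ω → ℝ} (hnn : ∀ ω, 0 ≤ X ω)
    (hint : Integrable X P) (hC : Integrable (fun ω => Real.logb 2 (1 + X ω)) P) :
    ∫ ω, Real.logb 2 (1 + X ω) ∂P ≤ Real.logb 2 (1 + ∫ ω, X ω ∂P) := by
  have hl2 : 0 < Real.log 2 := Real.log_pos one_lt_two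
  have hm0 : 0 ≤ ∫ ω, X ω ∂P := integral_nonneg hnn
  set m := ∫ ω, X ω ∂P with hm
  have hdev : Integrable (fun ω => X ω - m) P := hint.sub (integrable_const m)
  have hslope := hdev.const_mul (1 / (1 + m) / Real.log 2)
  have hle : ∫ ω, Real.logb 2 (1 + X ω) ∂P ≤
      ∫ ω, (Real.logb 2 (1 + m) + 1 / (1 + m) / Real.log 2 * (X ω - m)) ∂P := by
    refine integral_mono hC ((integrable_const _).add hslope) fun ω => ?_
    have hω := hnn ω
    have h := Real.log_le_sub_one_of_pos (x := (1 + X ω) / (1 + m)) (by positivity)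
    rw [Real.log_div (by positivity) (by positivity)] at h
    have hdiv : (1 + X ω) / (1 + m) - 1 = 1 / (1 + m) * (X ω - m) := by
      field_simp
      ring
    simp only [Real.logb]
    calc _ ≤ (Real.log (1 + m) + 1 / (1 + m) * (X ω - m)) / Real.log 2 := by
          gcongr
          linarith
      _ = _ := by ring
  rw [integral_add (integrable_const _) hslope, integral_const_mul,
    integral_sub hint (integrable_const m), ← hm] at hle
  simpa using hle

lemma one_sub_one_div_sq_nonneg {x : ℝ} (hx : 0 ≤ x) : 0 ≤ 1 - 1 / (1 + x) ^ 2 := by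
  rw [sub_nonneg, div_le_one (by positivity)]
  nlinarith

lemma concaveOn_sqrt_one_sub_one_div_sq :
    ConcaveOn ℝ (Set.Ici 0) fun x : ℝ => Real.sqrt (1 - 1 / (1 + x) ^ 2) := by
  refine ⟨convex_Ici 0, fun x hx y hy a b ha hb hab => ?_⟩
  rw [Set.mem_Ici] at hx hy
  have hsqrt := Real.strictConcaveOn_sqrt.concaveOn.2 (one_sub_one_div_sq_nonneg hx)
    (one_sub_one_div_sq_nonneg hy) ha hb hab
  refine hsqrt.trans (Real.sqrt_le_sqrt ?_)
  have hinv := (convexOn_zpow (𝕜 := ℝ) (-2)).2 (x := 1 + x) (y := 1 + y)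
    (by simp only [Set.mem_Ioi]; positivity) (by simp only [Set.mem_Ioi]; positivity) ha hb hab
  have hcomb : a • (1 + x) + b • (1 + y) = 1 + (a • x + b • y) := by
    simp only [smul_eq_mul]
    linear_combination hab
  have hzpow : ∀ z : ℝ, z ^ (-2 : ℤ) = 1 / z ^ 2 := fun z => by
    rw [zpow_neg, one_div]
    norm_cast
  rw [hcomb] at hinv
  simp only [hzpow, smul_eq_mul] at hinv ⊢
  linarith

lemma integrable_sqrt_one_sub_one_div_sq {Ω : Type*} [MeasurableSpace Ω]
    {P : Measure Ω} [IsFiniteMeasure P] {X : Ω → ℝ} (hm : Measurable X) :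
    Integrable (fun ω => Real.sqrt (1 - 1 / (1 + X ω) ^ 2)) P := by
  have hmeas : Measurable fun ω => Real.sqrt (1 - 1 / (1 + X ω) ^ 2) := by fun_prop
  refine Integrable.of_bound hmeas.aestronglyMeasurable 1 (Filter.Eventually.of_forall fun ω => ?_)
  rw [Real.norm_of_nonneg (Real.sqrt_nonneg _), Real.sqrt_le_one]
  have : 0 ≤ 1 / (1 + X ω) ^ 2 := by positivity
  linarith

/-- Jensen's inequality for the square root of the channel dispersion. -/
lemma integral_sqrt_one_sub_one_div_sq_le {Ω : Type*} [MeasurableSpace Ω]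
    {P : Measure Ω} [IsProbabilityMeasure P] {X : Ω → ℝ} (hm : Measurable X)
    (hnn : ∀ ω, 0 ≤ X ω) (hint : Integrable X P) :
    ∫ ω, Real.sqrt (1 - 1 / (1 + X ω) ^ 2) ∂P ≤
      Real.sqrt (1 - 1 / (1 + ∫ ω, X ω ∂P) ^ 2) := by
  refine concaveOn_sqrt_one_sub_one_div_sq.le_map_integral ?_ isClosed_Ici
    (Filter.Eventually.of_forall hnn) hint (integrable_sqrt_one_sub_one_div_sq hm)
  refine ContinuousOn.sqrt (continuousOn_const.sub (continuousOn_const.div (by fun_prop) ?_))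
  intro x hx
  rw [Set.mem_Ici] at hx
  positivity

lemma div_mul_sqrt_dispersion_eq (q r : ℝ) {x : ℝ} (hx : 0 ≤ x) :
    q / r * Real.sqrt ((x ^ 2 + 2 * x) / (Real.log 2 ^ 2 * (1 + x) ^ 2)) =
      q / (Real.log 2 * r) * Real.sqrt (1 - 1 / (1 + x) ^ 2) := by
  have hl2 : 0 < Real.log 2 := Real.log_pos one_lt_two
  have hfrac : (x ^ 2 + 2 * x) / (Real.log 2 ^ 2 * (1 + x) ^ 2) =
      (1 - 1 / (1 + x) ^ 2) / Real.log 2 ^ 2 := by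
    field_simp
    ring
  rw [hfrac, Real.sqrt_div (one_sub_one_div_sq_nonneg hx), Real.sqrt_sq hl2.le]
  ring

/-- Lower bound on the average finite-blocklength achievable secrecy rate over the
fading distributions of Bob's and Eve's SNRs. -/
theorem average_secrecy_rate_lower_bound {Ω : Type*} [MeasurableSpace Ω]
    (P : Measure Ω) [IsProbabilityMeasure P] (XB XE : Ω → ℝ)
    (hXBm : Measurable XB) (hXEm : Measurable XE)
    (hXBnn : ∀ ω, 0 ≤ XB ω) (hXEnn : ∀ ω, 0 ≤ XE ω)
    (hXBint : Integrable XB P) (hXEint : Integrable XE P)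
    (hln : Integrable (fun ω => Real.log (XB ω)) P)
    (hCB : Integrable (fun ω => Real.logb 2 (1 + XB ω)) P)
    (hCE : Integrable (fun ω => Real.logb 2 (1 + XE ω)) P)
    (hXBpos : ∀ᵐ ω ∂P, 0 < XB ω)
    (n : ℕ) (hn : 1 ≤ n) (qε qδ : ℝ) (hqε : 0 ≤ qε) (hqδ : 0 ≤ qδ) :
    ∫ ω, (max (Real.logb 2 (1 + XB ω) - Real.logb 2 (1 + XE ω)) 0
        - (qε / Real.sqrt n) *
            Real.sqrt ((XB ω ^ 2 + 2 * XB ω) / (Real.log 2 ^ 2 * (1 + XB ω) ^ 2))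
        - (qδ / Real.sqrt n) *
            Real.sqrt ((XE ω ^ 2 + 2 * XE ω) / (Real.log 2 ^ 2 * (1 + XE ω) ^ 2))) ∂P ≥
      Real.logb 2 (1 + Real.exp (∫ ω, Real.log (XB ω) ∂P))
        - Real.logb 2 (1 + ∫ ω, XE ω ∂P)
        - (qε / (Real.log 2 * Real.sqrt n)) *
            Real.sqrt (1 - 1 / (1 + ∫ ω, XB ω ∂P) ^ 2)
        - (qδ / (Real.log 2 * Real.sqrt n)) *
            Real.sqrt (1 - 1 / (1 + ∫ ω, XE ω ∂P) ^ 2) := by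
  simp only [div_mul_sqrt_dispersion_eq _ _ (hXBnn _), div_mul_sqrt_dispersion_eq _ _ (hXEnn _)]
  have hl2 : 0 < Real.log 2 := Real.log_pos one_lt_two
  have hdiff : Integrable (fun ω => Real.logb 2 (1 + XB ω) - Real.logb 2 (1 + XE ω)) P :=
    hCB.sub hCE
  have hmax : Integrable
      (fun ω => max (Real.logb 2 (1 + XB ω) - Real.logb 2 (1 + XE ω)) 0) P := hdiff.pos_part
  have hVB := (integrable_sqrt_one_sub_one_div_sq (P := P) hXBm).const_mul
    (qε / (Real.log 2 * Real.sqrt n))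
  have hVE := (integrable_sqrt_one_sub_one_div_sq (P := P) hXEm).const_mul
    (qδ / (Real.log 2 * Real.sqrt n))
  rw [integral_sub (by exact hmax.sub hVB) hVE, integral_sub hmax hVB, integral_const_mul,
    integral_const_mul, ge_iff_le]
  have hcap : ∫ ω, (Real.logb 2 (1 + XB ω) - Real.logb 2 (1 + XE ω)) ∂P ≤
      ∫ ω, max (Real.logb 2 (1 + XB ω) - Real.logb 2 (1 + XE ω)) 0 ∂P :=
    integral_mono hdiff hmax fun ω => le_max_left _ _
  rw [integral_sub hCB hCE] at hcap
  have hB := logb_one_add_exp_integral_log_le hXBpos hln hCB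
  have hE := integral_logb_one_add_le hXEnn hXEint hCE
  refine sub_le_sub (sub_le_sub (by linarith) ?_) ?_
  · exact mul_le_mul_of_nonneg_left (integral_sqrt_one_sub_one_div_sq_le hXBm hXBnn hXBint)
      (by positivity)
  · exact mul_le_mul_of_nonneg_left (integral_sqrt_one_sub_one_div_sq_le hXEm hXEnn hXEint)
      (by positivity)
end

section
/- Let (Ω, F, P) be a probability space and let X : Ω → ℝ be a random variable with X > 0 almost surely such that ln(X) and log₂(1+X) are integrable. Then E[log₂(1+X)] ≥ log₂(1 + exp(E[ln X])). -/
open MeasureTheory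

theorem hasDerivAt_log_one_add_exp (u : ℝ) :
    HasDerivAt (fun u => Real.log (1 + Real.exp u)) (Real.exp u / (1 + Real.exp u)) u :=
  ((Real.hasDerivAt_exp u).const_add 1).log (by positivity)

theorem convexOn_log_one_add_exp :
    ConvexOn ℝ Set.univ (fun u => Real.log (1 + Real.exp u)) := by
  refine Monotone.convexOn_univ_of_deriv
    (fun u => (hasDerivAt_log_one_add_exp u).differentiableAt) fun a b hab => ?_
  rw [(hasDerivAt_log_one_add_exp a).deriv, (hasDerivAt_log_one_add_exp b).deriv,
    div_le_div_iff₀ (by positivity) (by positivity)]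
  linarith [Real.exp_le_exp.mpr hab, mul_comm (Real.exp a) (Real.exp b)]

theorem convexOn_logb_two_one_add_exp :
    ConvexOn ℝ Set.univ (fun u => Real.logb 2 (1 + Real.exp u)) := by
  have h := convexOn_log_one_add_exp.smul (inv_nonneg.mpr (Real.log_nonneg one_le_two))
  simpa only [Real.logb, div_eq_inv_mul, smul_eq_mul] using h

theorem continuous_logb_two_one_add_exp :
    Continuous (fun u => Real.logb 2 (1 + Real.exp u)) :=
  (continuous_iff_continuousAt.mpr
    fun u => (hasDerivAt_log_one_add_exp u).continuousAt).div_const (Real.log 2)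

/-- If `X > 0` a.s. and `ln X` and `log₂(1+X)` are integrable, then
`E[log₂(1+X)] ≥ log₂(1 + exp(E[ln X]))`. -/
theorem expectation_logb_one_add_ge {Ω : Type*} [MeasurableSpace Ω]
    (P : Measure Ω) [IsProbabilityMeasure P] (X : Ω → ℝ)
    (hpos : ∀ᵐ ω ∂P, 0 < X ω)
    (hln : Integrable (fun ω => Real.log (X ω)) P)
    (hlog : Integrable (fun ω => Real.logb 2 (1 + X ω)) P) :
    ∫ ω, Real.logb 2 (1 + X ω) ∂P ≥
      Real.logb 2 (1 + Real.exp (∫ ω, Real.log (X ω) ∂P)) := by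
  have heq : (fun ω => Real.logb 2 (1 + X ω)) =ᵐ[P]
      fun ω => Real.logb 2 (1 + Real.exp (Real.log (X ω))) := by
    filter_upwards [hpos] with ω hω
    rw [Real.exp_log hω]
  rw [ge_iff_le, integral_congr_ae heq]
  exact convexOn_logb_two_one_add_exp.map_integral_le
    continuous_logb_two_one_add_exp.continuousOn isClosed_univ
    (Filter.Eventually.of_forall fun _ => Set.mem_univ _) hln (hlog.congr heq)
end

section
/- The function x ↦ √((x² + 2x)/(1 + x)²) is concave on the interval [0, ∞). -/
/-- For `x ≥ 0`, the dispersion ratio is `1 - (1 + x)⁻²`. -/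
theorem dispersion_eq_one_sub_zpow {x : ℝ} (hx : 0 ≤ x) :
    (x ^ 2 + 2 * x) / (1 + x) ^ 2 = 1 - (1 + x) ^ (-2 : ℤ) := by
  have h : (1 + x) ≠ 0 := by positivity
  rw [zpow_neg, zpow_ofNat]
  field_simp
  ring

theorem dispersion_concaveOn :
    ConcaveOn ℝ (Set.Ici (0 : ℝ)) (fun x : ℝ => (x ^ 2 + 2 * x) / (1 + x) ^ 2) := by
  refine ⟨convex_Ici 0, fun x hx y hy a b ha hb hab => ?_⟩
  have hz : 0 ≤ a • x + b • y := convex_Ici (0 : ℝ) hx hy ha hb hab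
  rw [Set.mem_Ici] at hx hy
  have h := (convexOn_zpow (𝕜 := ℝ) (-2)).2 (Set.mem_Ioi.2 (by linarith : 0 < 1 + x))
    (Set.mem_Ioi.2 (by linarith : 0 < 1 + y)) ha hb hab
  have hshift : a • (1 + x) + b • (1 + y) = 1 + (a • x + b • y) := by
    simp only [smul_eq_mul]
    linear_combination hab
  rw [hshift] at h
  simp only [dispersion_eq_one_sub_zpow hx, dispersion_eq_one_sub_zpow hy,
    dispersion_eq_one_sub_zpow hz]
  simp only [smul_eq_mul] at h ⊢
  linarith

/-- The function `x ↦ √((x² + 2x)/(1+x)²)` is concave on `[0, ∞)`. -/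
theorem sqrt_dispersion_concaveOn :
    ConcaveOn ℝ (Set.Ici (0 : ℝ))
      (fun x : ℝ => Real.sqrt ((x ^ 2 + 2 * x) / (1 + x) ^ 2)) := by
  refine ⟨convex_Ici 0, fun x hx y hy a b ha hb hab => ?_⟩
  have hnonneg : ∀ t ∈ Set.Ici (0 : ℝ), (t ^ 2 + 2 * t) / (1 + t) ^ 2 ∈ Set.Ici (0 : ℝ) := by
    intro t ht
    rw [Set.mem_Ici] at ht ⊢
    positivity
  exact (Real.strictConcaveOn_sqrt.concaveOn.2 (hnonneg x hx) (hnonneg y hy) ha hb hab).trans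
    (Real.sqrt_le_sqrt (dispersion_concaveOn.2 hx hy ha hb hab))
end
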